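/- arXiv:2404.17162 — 2 statements merged into one kernel-verified Lean document; each statement's English description precedes it below -/
import Mathlib

section
/- Let A be an Abelian group with |A| > 2. If a connected finite simple graph G has at most three equivalence classes under the relation ∼_G (where u ∼_G v iff N_G(u) = N_G(v)), then G is A-vertex magic. -/
open scoped Classical

/-- A graph `G` on a finite vertex type is `A`-vertex magic if there is a labeling of the
vertices by nonzero elements of `A` such that the sum of the labels over each open
neighborhood is a constant `μ`. -/
def vertexMagic {V : Type*} [Fintype V] (G : SimpleGraph V) (A : Type*) [AddCommGroup A] :
    Prop :=
  ∃ (l : V → A) (μ : A), (∀ v, l v ≠ 0) ∧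
    ∀ v : V, (∑ u : V, if G.Adj v u then l u else 0) = μ

/-- The equivalence relation `u ∼_G v ↔ N_G(u) = N_G(v)`. -/
def nbhdSetoid {V : Type*} (G : SimpleGraph V) : Setoid V :=
  ⟨fun u v => G.neighborSet u = G.neighborSet v,
    ⟨fun _ => rfl, Eq.symm, Eq.trans⟩⟩

/-- The reduced graph of `G`: vertices are the equivalence classes of `∼_G`, with `[u]`
adjacent to `[v]` iff `u` is adjacent to `v` in `G`. -/
def reducedGraph {V : Type*} (G : SimpleGraph V) :
    SimpleGraph (Quotient (nbhdSetoid G)) where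
  Adj x y := ∃ u v : V, Quotient.mk (nbhdSetoid G) u = x ∧
    Quotient.mk (nbhdSetoid G) v = y ∧ G.Adj u v
  symm := by
    constructor
    rintro x y ⟨u, v, hu, hv, h⟩
    exact ⟨v, u, hv, hu, h.symm⟩
  loopless := by
    constructor
    rintro x ⟨u, v, hu, hv, h⟩
    rw [← hv] at hu
    have hN : G.neighborSet u = G.neighborSet v := Quotient.exact hu
    have hm : u ∈ G.neighborSet v := h.symm
    rw [← hN] at hm
    exact G.loopless.irrefl u hm

theorem aux_label {V A : Type*} [AddCommGroup A] (hA : 2 < Cardinal.mk A) (S : Finset V)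
    (hS : S.Nonempty) : ∀ s : A, s ≠ 0 → ∃ l : V → A, (∀ v, l v ≠ 0) ∧ ∑ v ∈ S, l v = s := by
  induction hS using Finset.Nonempty.cons_induction with
  | singleton a => exact fun s hs => ⟨fun _ => s, fun _ => hs, by simp⟩
  | cons a S ha hS ih =>
    intro s hs
    obtain ⟨b, hb0, hbs⟩ : ∃ b : A, b ≠ 0 ∧ b ≠ s := by
      by_contra! h
      have h1 : (Set.univ : Set A) ⊆ {0, s} := by
        intro b _
        by_cases hb : b = 0
        · simp [hb]
        · simp [h b hb]
      have h2 := Cardinal.mk_le_mk_of_subset h1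
      have h3 : Cardinal.mk ({0, s} : Set A) ≤ 2 := by
        have h4 := Cardinal.mk_insert_le (s := ({s} : Set A)) (a := 0)
        rw [Cardinal.mk_singleton, one_add_one_eq_two] at h4
        exact h4
      rw [Cardinal.mk_univ] at h2
      replace h2 := h2.trans h3
      exact absurd hA (not_lt.mpr h2)
    obtain ⟨l, hl, hsum⟩ := ih (s - b) (sub_ne_zero.mpr hbs.symm)
    refine ⟨fun v => if v = a then b else l v, ?_, ?_⟩
    · intro v
      dsimp only
      split_ifs
      exacts [hb0, hl v]
    · rw [Finset.sum_cons]
      have : ∑ v ∈ S, (if v = a then b else l v) = ∑ v ∈ S, l v := by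
        refine Finset.sum_congr rfl fun v hv => if_neg ?_
        rintro rfl
        exact ha hv
      rw [this, hsum]
      simp

theorem aux_half {V : Type*} [Fintype V] (G : SimpleGraph V) (hG : G.Connected)
    (hclasses : Fintype.card (Quotient (nbhdSetoid G)) ≤ 3) (u v w : V)
    (huv : ¬ G.Adj u v) (h1 : G.Adj u w) (h2 : ¬ G.Adj v w) : False := by
  have key : ∀ a b : V, Quotient.mk (nbhdSetoid G) a = Quotient.mk (nbhdSetoid G) b →
      ∀ c, G.Adj a c ↔ G.Adj b c := by
    intro a b hab c
    have h : G.neighborSet a = G.neighborSet b := Quotient.exact hab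
    rw [← SimpleGraph.mem_neighborSet, h, SimpleGraph.mem_neighborSet]
  have hne : u ≠ v := by rintro rfl; exact h2 h1
  have : Nontrivial V := ⟨u, v, hne⟩
  obtain ⟨x, hx⟩ := hG.preconnected.exists_adj_of_nontrivial v
  have e1 : Quotient.mk (nbhdSetoid G) u ≠ Quotient.mk (nbhdSetoid G) v :=
    fun h => h2 ((key _ _ h w).1 h1)
  have e2 : Quotient.mk (nbhdSetoid G) u ≠ Quotient.mk (nbhdSetoid G) w :=
    fun h => G.irrefl ((key _ _ h w).1 h1)
  have e3 : Quotient.mk (nbhdSetoid G) v ≠ Quotient.mk (nbhdSetoid G) w :=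
    fun h => huv ((key _ _ h u).2 h1.symm).symm
  have e4 : Quotient.mk (nbhdSetoid G) x ≠ Quotient.mk (nbhdSetoid G) u :=
    fun h => huv ((key _ _ h v).1 hx.symm)
  have e5 : Quotient.mk (nbhdSetoid G) x ≠ Quotient.mk (nbhdSetoid G) v :=
    fun h => G.irrefl ((key _ _ h v).1 hx.symm)
  have e6 : Quotient.mk (nbhdSetoid G) x ≠ Quotient.mk (nbhdSetoid G) w :=
    fun h => h2 ((key _ _ h v).1 hx.symm).symm
  have hc : ({Quotient.mk (nbhdSetoid G) x, Quotient.mk (nbhdSetoid G) u,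
      Quotient.mk (nbhdSetoid G) v, Quotient.mk (nbhdSetoid G) w} : Finset _).card = 4 := by
    rw [Finset.card_insert_of_notMem (by simp [e4, e5, e6]),
      Finset.card_insert_of_notMem (by simp [e1, e2]), Finset.card_pair e3]
  have := Finset.card_le_univ ({Quotient.mk (nbhdSetoid G) x, Quotient.mk (nbhdSetoid G) u,
      Quotient.mk (nbhdSetoid G) v, Quotient.mk (nbhdSetoid G) w} : Finset _)
  omega

theorem stmt_4 {V : Type*} [Fintype V] (G : SimpleGraph V) (hG : G.Connected)
    (hclasses : Fintype.card (Quotient (nbhdSetoid G)) ≤ 3)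
    (A : Type*) [AddCommGroup A] (hA : 2 < Cardinal.mk A) :
    vertexMagic G A := by
  have key : ∀ u v, ¬ G.Adj u v ↔
      Quotient.mk (nbhdSetoid G) v = Quotient.mk (nbhdSetoid G) u := by
    intro u v
    constructor
    · intro huv
      refine Quotient.sound (s := nbhdSetoid G) ?_
      change G.neighborSet v = G.neighborSet u
      ext w
      simp only [SimpleGraph.mem_neighborSet]
      constructor
      · intro h
        by_contra h'
        exact aux_half G hG hclasses v u w (fun h => huv h.symm) h h'
      · intro h
        by_contra h'
        exact aux_half G hG hclasses u v w huv h h'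
    · intro h hadj
      have h : G.neighborSet v = G.neighborSet u := Quotient.exact h
      have h3 : v ∈ G.neighborSet u := hadj
      rw [← h] at h3
      exact G.irrefl h3
  obtain ⟨s, hs⟩ : ∃ s : A, s ≠ 0 := by
    by_contra! h
    have : Subsingleton A := ⟨fun a b => by rw [h a, h b]⟩
    have h1 : Cardinal.mk A ≤ 1 := Cardinal.le_one_iff_subsingleton.mpr this
    have h2 := hA.trans_le h1
    norm_num at h2
  have hf : ∀ q : Quotient (nbhdSetoid G), ∃ l : V → A, (∀ v, l v ≠ 0) ∧
      ∑ v ∈ Finset.univ.filter (fun v => Quotient.mk (nbhdSetoid G) v = q), l v = s := by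
    intro q
    refine aux_label hA _ ?_ s hs
    obtain ⟨v, rfl⟩ := Quotient.exists_rep q
    exact ⟨v, by simp⟩
  choose f hf0 hfs using hf
  refine ⟨fun v => f (Quotient.mk (nbhdSetoid G) v) v,
    (∑ v, f (Quotient.mk (nbhdSetoid G) v) v) - s, fun v => hf0 _ v, fun v => ?_⟩
  rw [eq_sub_iff_add_eq, ← Finset.sum_filter,
    ← Finset.sum_filter_add_sum_filter_not Finset.univ (fun u => G.Adj v u)]
  congr 1
  rw [← hfs (Quotient.mk (nbhdSetoid G) v)]
  simp only [key]
  refine Finset.sum_congr rfl fun u hu => ?_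
  rw [(Finset.mem_filter.1 hu).2]
end

section
/- Let n ≡ 2 (mod 4) with n ≥ 6 and let m ≥ 1 with m ≢ 1 (mod 3). For a non-trivial Abelian group A, the generalised friendship graph f_{n,m} is A-vertex magic if and only if A is not isomorphic to Z_3. -/
open scoped Classical

/-- The generalised friendship graph `f_{n,m}`: `m` cycles of length `n` all meeting at a
single common vertex (the vertex `none`) and otherwise pairwise disjoint.  The vertices of
the `i`-th cycle other than the common vertex are `some (i, 0), …, some (i, n - 2)`, laid
out consecutively along the cycle with both ends joined to the common vertex. -/
def genFriendshipGraph (n m : ℕ) : SimpleGraph (Option (Fin m × Fin (n - 1))) where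
  Adj x y :=
    match x, y with
    | none, none => False
    | none, some (_, j) => j.val = 0 ∨ j.val = n - 2
    | some (_, j), none => j.val = 0 ∨ j.val = n - 2
    | some (i, j), some (i', j') => i = i' ∧ (j.val + 1 = j'.val ∨ j'.val + 1 = j.val)
  symm := by
    refine ⟨?_⟩
    rintro (_ | ⟨i, j⟩) (_ | ⟨i', j'⟩) h <;> simp_all; tauto
  loopless := by
    refine ⟨?_⟩
    rintro (_ | ⟨i, j⟩) h <;> simp_all


theorem sum_fin_val {A : Type*} [AddCommGroup A] (N k : ℕ) (g : ℕ → A) :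
    (∑ j : Fin N, if j.val = k then g j.val else 0) = if k < N then g k else 0 := by
  rw [Fin.sum_univ_eq_sum_range (fun j => if j = k then g j else 0) N]
  simp [Finset.sum_ite_eq']

theorem sum_fin_two {A : Type*} [AddCommGroup A] (N k k' : ℕ) (h : k ≠ k') (g : ℕ → A) :
    (∑ j : Fin N, if j.val = k ∨ j.val = k' then g j.val else 0) =
      (if k < N then g k else 0) + if k' < N then g k' else 0 := by
  rw [← sum_fin_val, ← sum_fin_val, ← Finset.sum_add_distrib]
  refine Finset.sum_congr rfl fun j _ => ?_
  by_cases h1 : j.val = k <;> by_cases h2 : j.val = k' <;> simp [h1, h2] <;> omega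

/-- labels along cycle, positions `0..n`, both ends the centre -/
def ext (n m : ℕ) {A : Type*} (l : Option (Fin m × Fin (n - 1)) → A) (i : Fin m) (p : ℕ) : A :=
  if h : 1 ≤ p ∧ p - 1 < n - 1 then l (some (i, ⟨p - 1, h.2⟩)) else l none

theorem ext_succ (n m : ℕ) {A : Type*} (l : Option (Fin m × Fin (n - 1)) → A) (i : Fin m)
    (j : Fin (n - 1)) : ext n m l i (j.val + 1) = l (some (i, j)) := by
  simp [ext]

theorem weight_none (n m : ℕ) (hn6 : 6 ≤ n) {A : Type*} [AddCommGroup A]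
    (l : Option (Fin m × Fin (n - 1)) → A) :
    (∑ u, if (genFriendshipGraph n m).Adj none u then l u else 0) =
      ∑ i : Fin m, (ext n m l i 1 + ext n m l i (n - 1)) := by
  rw [Fintype.sum_option, Fintype.sum_prod_type]
  have g1 : (if (genFriendshipGraph n m).Adj none none then l none else 0) = 0 :=
    if_neg (fun h => h)
  have g2 : ∀ (i : Fin m) (x : Fin (n - 1)),
      (if (genFriendshipGraph n m).Adj none (some (i, x)) then l (some (i, x)) else 0) =
        if x.val = 0 ∨ x.val = n - 2 then l (some (i, x)) else 0 :=
    fun i x => if_congr Iff.rfl rfl rfl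
  simp only [g1, g2, zero_add]
  refine Finset.sum_congr rfl fun i _ => ?_
  have := sum_fin_two (n - 1) 0 (n - 2) (by omega) (fun p => ext n m l i (p + 1))
  simp only [ext_succ] at this
  rw [this, if_pos (by omega), if_pos (by omega)]
  congr 2
  omega

theorem weight_some (n m : ℕ) (hn6 : 6 ≤ n) {A : Type*} [AddCommGroup A]
    (l : Option (Fin m × Fin (n - 1)) → A) (i : Fin m) (j : Fin (n - 1)) :
    (∑ u, if (genFriendshipGraph n m).Adj (some (i, j)) u then l u else 0) =
      ext n m l i j.val + ext n m l i (j.val + 2) := by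
  rw [Fintype.sum_option, Fintype.sum_prod_type]
  have g1 : (if (genFriendshipGraph n m).Adj (some (i, j)) none then l none else 0) =
      if j.val = 0 ∨ j.val = n - 2 then l none else 0 := if_congr Iff.rfl rfl rfl
  have g2 : ∀ (i' : Fin m) (x : Fin (n - 1)),
      (if (genFriendshipGraph n m).Adj (some (i, j)) (some (i', x)) then
        l (some (i', x)) else 0) =
        if i = i' ∧ (j.val + 1 = x.val ∨ x.val + 1 = j.val) then l (some (i', x)) else 0 :=
    fun i' x => if_congr Iff.rfl rfl rfl
  simp only [g1, g2]
  rw [Finset.sum_eq_single i]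
  rotate_left
  · intro b _ hb
    simp [hb.symm]
  · simp
  have hj := j.isLt
  have e0 : ext n m l i 0 = l none := by simp [ext]
  have en : ext n m l i n = l none := by
    unfold ext
    rw [dif_neg]
    omega
  have key : (∑ x : Fin (n - 1), if i = i ∧ (j.val + 1 = x.val ∨ x.val + 1 = j.val) then
      l (some (i, x)) else 0) = (if j.val + 1 < n - 1 then ext n m l i (j.val + 2) else 0) +
        (if j.val = 0 then 0 else ext n m l i j.val) := by
    by_cases h0 : j.val = 0
    · have := sum_fin_val (n - 1) (j.val + 1) (fun p => ext n m l i (p + 1))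
      simp only [ext_succ] at this
      rw [if_pos h0, add_zero, ← this]
      refine Finset.sum_congr rfl fun x _ => ?_
      congr 1
      apply propext
      constructor
      · rintro ⟨_, h | h⟩ <;> omega
      · intro h
        exact ⟨rfl, by omega⟩
    · have := sum_fin_two (n - 1) (j.val + 1) (j.val - 1) (by omega)
        (fun p => ext n m l i (p + 1))
      simp only [ext_succ] at this
      have e : j.val - 1 + 1 = j.val := by omega
      rw [e, if_pos (show j.val - 1 < n - 1 by omega)] at this
      rw [if_neg h0, ← this]
      refine Finset.sum_congr rfl fun x _ => ?_
      congr 1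
      apply propext
      constructor
      · rintro ⟨_, h | h⟩ <;> omega
      · intro h
        exact ⟨rfl, by omega⟩
  rw [key]
  by_cases h0 : j.val = 0
  · rw [if_pos (Or.inl h0), if_pos (by omega), if_pos h0, h0, e0, add_zero]
  · by_cases h1 : j.val = n - 2
    · have e : j.val + 2 = n := by omega
      rw [if_pos (Or.inr h1), if_neg (by omega), if_neg h0, e, en, zero_add, add_comm]
    · rw [if_neg (by omega), if_pos (by omega), if_neg h0, zero_add, add_comm]

theorem forward (n m : ℕ) (hn : n % 4 = 2) (hn6 : 6 ≤ n) (hmp : 0 < m) (hm3 : m % 3 ≠ 1)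
    (A : Type*) [AddCommGroup A] (h : vertexMagic (genFriendshipGraph n m) A)
    (e : A ≃+ ZMod 3) : False := by
  obtain ⟨l, μ, hl, hw⟩ := h
  have z3 : ∀ a b c : ZMod 3, a ≠ 0 → b ≠ 0 → c ≠ 0 → a + b = c + c → a = c := by decide
  have z3' : ∀ a b c : A, a ≠ 0 → b ≠ 0 → c ≠ 0 → a + b = c + c → a = c := by
    intro a b c ha hb hc h
    apply e.injective
    apply z3 (e a) (e b) (e c)
    · simpa using ha
    · simpa using hb
    · simpa using hc
    · rw [← map_add, h, map_add]
  have hne : ∀ i p, ext n m l i p ≠ 0 := by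
    intro i p
    unfold ext
    split_ifs <;> exact hl _
  have hstep : ∀ i p, p < n - 1 → ext n m l i p + ext n m l i (p + 2) = μ := by
    intro i p hp
    rw [← weight_some n m hn6 l i ⟨p, hp⟩]
    exact hw _
  have hper : ∀ i p, p + 2 < n - 1 → ext n m l i (p + 4) = ext n m l i p := by
    intro i p hp
    have h1 := hstep i p (by omega)
    have h2 := hstep i (p + 2) hp
    have : ext n m l i (p + 4) + ext n m l i (p + 2) =
      ext n m l i p + ext n m l i (p + 2) := by rw [h1, add_comm]; exact h2
    exact add_right_cancel this
  have hper2 : ∀ i p k, p + 4 * k < n + 1 → ext n m l i (p + 4 * k) = ext n m l i p := by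
    intro i p k
    induction k with
    | zero => simp
    | succ k ih =>
      intro h
      rw [← ih (by omega), ← hper i (p + 4 * k) (by omega)]
      congr 1
  obtain ⟨k, rfl⟩ : ∃ k, n = 4 * k + 2 := ⟨n / 4, by omega⟩
  have hlast : ∀ i, ext (4 * k + 2) m l i (4 * k + 2 - 1) = ext (4 * k + 2) m l i 1 := by
    intro i
    rw [← hper2 i 1 k (by omega)]
    congr 1
    omega
  have hmu : ∀ i : Fin m, μ = l none + l none := by
    intro i
    have h1 := hstep i (4 * k) (by omega)
    have h2 := hper2 i 0 k (by omega)
    rw [zero_add] at h2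
    have e0 : ext (4 * k + 2) m l i 0 = l none := by simp [ext]
    have en : ext (4 * k + 2) m l i (4 * k + 2) = l none := by
      unfold ext
      rw [dif_neg]
      omega
    rw [h2, e0, en] at h1
    exact h1.symm
  have hb : ∀ i, ext (4 * k + 2) m l i 1 = l none := by
    intro i
    apply z3' _ _ _ (hne i 1) (hne i 3) (hl none)
    rw [← hmu i]
    exact hstep i 1 (by omega)
  have h0 := hw none
  rw [weight_none _ _ hn6] at h0
  simp only [hlast, hb] at h0
  rw [Finset.sum_const, Finset.card_univ, Fintype.card_fin] at h0
  have hc := hl none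
  rw [hmu ⟨0, hmp⟩] at h0
  have h1 := congrArg e h0
  have hc' : e (l none) ≠ 0 := by simpa using hc
  rw [map_nsmul, map_add, nsmul_eq_mul] at h1
  have z4 : ∀ x c : ZMod 3, c ≠ 0 → x * (c + c) = c + c → x = 1 := by decide
  have h4 := z4 _ _ hc' h1
  have : ((m : ℕ) : ZMod 3) = ((1 : ℕ) : ZMod 3) := by simpa using h4
  rw [ZMod.natCast_eq_natCast_iff'] at this
  omega

theorem exists_good {A : Type*} [AddCommGroup A] (c b d : A) (h2 : ∀ a : A, a + a = 0 → a = 0)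
    (hc : c ≠ 0)
    (hb0 : b ≠ 0) (hb1 : b ≠ c) (hb2 : b ≠ -c) (hb3 : b ≠ c + c)
    (hd0 : d ≠ 0) (hd1 : d ≠ c + c) (hd2 : -d ≠ c + c) (m : ℕ) (hm : 2 ≤ m) :
    ∃ f : ℕ → A, (∀ i, f i ≠ 0 ∧ f i ≠ c + c) ∧ ∑ i ∈ Finset.range m, f i = c := by
  rcases Nat.even_or_odd' m with ⟨k, rfl | rfl⟩
  · obtain ⟨k, rfl⟩ : ∃ k', k = k' + 1 := ⟨k - 1, by omega⟩
    refine ⟨fun i => if i = 0 then b else if i = 1 then c - b else if i % 2 = 0 then d else -d,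
      ?_, ?_⟩
    · intro i
      dsimp only
      split_ifs
      · exact ⟨hb0, hb3⟩
      · refine ⟨sub_ne_zero.2 hb1.symm, fun h => hb2 ?_⟩
        have : b = c - (c - b) := by abel
        rw [this, h]
        abel
      · exact ⟨hd0, hd1⟩
      · exact ⟨neg_ne_zero.2 hd0, hd2⟩
    · clear hm
      induction k with
      | zero => simp [Finset.sum_range_succ]
      | succ k ih =>
        rw [show 2 * (k + 1 + 1) = 2 * (k + 1) + 1 + 1 by ring, Finset.sum_range_succ,
          Finset.sum_range_succ, ih]
        have q1 : (2 * (k + 1)) % 2 = 0 := by omega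
        have q2 : (2 * (k + 1) + 1) % 2 = 1 := by omega
        have q3 : 2 * (k + 1) ≠ 1 := by omega
        simp [q1, q2, q3]
  · refine ⟨fun i => if i = 0 then c else if i % 2 = 0 then -d else d, ?_, ?_⟩
    · intro i
      dsimp only
      split_ifs
      · exact ⟨hc, by simpa using hc⟩
      · exact ⟨neg_ne_zero.2 hd0, hd2⟩
      · exact ⟨hd0, hd1⟩
    · clear hm
      induction k with
      | zero => simp
      | succ k ih =>
        rw [show 2 * (k + 1) + 1 = 2 * k + 1 + 1 + 1 by ring, Finset.sum_range_succ,
          Finset.sum_range_succ, ih]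
        have q1 : (2 * k + 1) % 2 = 1 := by omega
        have q2 : (2 * k + 1 + 1) % 2 = 0 := by omega
        simp [q1, q2]

theorem magic_of (n m : ℕ) (hn : n % 4 = 2) (hn6 : 6 ≤ n) (A : Type*) [AddCommGroup A]
    (c : A) (hc : c ≠ 0) (f : ℕ → A) (hf : ∀ i, f i ≠ 0 ∧ f i ≠ c + c)
    (hs : ∑ i ∈ Finset.range m, (f i + f i) = c + c) :
    vertexMagic (genFriendshipGraph n m) A := by
  let L : Fin m → ℕ → A := fun i p =>
    if p % 2 = 0 then c else if p % 4 = 1 then f i else c + c - f i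
  let l : Option (Fin m × Fin (n - 1)) → A := fun v => match v with
    | none => c
    | some (i, j) => L i (j.val + 1)
  have hL : ∀ i p, p < n + 1 → ext n m l i p = L i p := by
    intro i p hp
    unfold ext
    split_ifs with h
    · change L i (p - 1 + 1) = _
      congr 1
      omega
    · change c = L i p
      have : p % 2 = 0 := by omega
      simp [L, this]
  refine ⟨l, c + c, ?_, ?_⟩
  · rintro (_ | ⟨i, j⟩)
    · exact hc
    · change L i (j.val + 1) ≠ 0
      simp only [L]
      split_ifs
      · exact hc
      · exact (hf _).1
      · exact sub_ne_zero.2 (hf _).2.symm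
  · rintro (_ | ⟨i, j⟩)
    · rw [weight_none n m hn6, ← hs, ← Fin.sum_univ_eq_sum_range (fun i => f i + f i) m]
      refine Finset.sum_congr rfl fun i _ => ?_
      rw [hL _ _ (by omega), hL _ _ (by omega)]
      have q1 : (n - 1) % 2 = 1 := by omega
      have q2 : (n - 1) % 4 = 1 := by omega
      simp [L, q1, q2]
    · have hj := j.isLt
      rw [weight_some n m hn6, hL _ _ (by omega), hL _ _ (by omega)]
      simp only [L]
      split_ifs <;> first | omega | abel

theorem iso_three {A : Type*} [AddCommGroup A] (c : A) (hc : c ≠ 0) (h2 : c + c ≠ 0)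
    (h : ∀ b : A, b = 0 ∨ b = c ∨ b = -c) : Nonempty (A ≃+ ZMod 3) := by
  have hcn : c ≠ -c := fun h => h2 (by nth_rewrite 1 [h]; simp)
  have hcard : Nat.card A = 3 := by
    have : (Set.univ : Set A) = (({0, c, -c} : Finset A) : Set A) := by
      ext b
      simpa using h b
    rw [← Set.ncard_univ, this, Set.ncard_coe_finset, Finset.card_eq_three]
    exact ⟨0, c, -c, hc.symm, (neg_ne_zero.2 hc).symm, hcn, rfl⟩
  haveI : Fact (Nat.Prime 3) := ⟨Nat.prime_three⟩
  haveI : IsAddCyclic A := isAddCyclic_of_prime_card hcard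
  have e := zmodAddCyclicAddEquiv (G := A) inferInstance
  rw [hcard] at e
  exact ⟨e.symm⟩

theorem backward (n m : ℕ) (hn : n % 4 = 2) (hn6 : 6 ≤ n) (hm : 1 ≤ m) (hm3 : m % 3 ≠ 1)
    (A : Type*) [AddCommGroup A] (hA : Nontrivial A) (hne : ¬ Nonempty (A ≃+ ZMod 3)) :
    vertexMagic (genFriendshipGraph n m) A := by
  by_cases h2 : ∀ a : A, a + a = 0 → a = 0
  swap
  · push Not at h2
    obtain ⟨c, h, hc⟩ := h2
    exact magic_of n m hn hn6 A c hc (fun _ => c) (fun _ => ⟨hc, by rwa [h]⟩) (by simp [h])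
  have key : ∃ c b d : A, c ≠ 0 ∧ b ≠ 0 ∧ b ≠ c ∧ b ≠ -c ∧ b ≠ c + c ∧ d ≠ 0 ∧ d ≠ c + c ∧
      -d ≠ c + c := by
    by_cases h3 : ∀ a : A, a + a + a = 0
    · obtain ⟨c, hc⟩ := exists_ne (0 : A)
      have hcc : c + c = -c := eq_neg_of_add_eq_zero_left (h3 c)
      by_contra hcon
      apply hne
      apply iso_three c hc (fun h => hc (h2 c h))
      intro b
      by_contra hb
      push Not at hb
      obtain ⟨b0, b1, b2⟩ := hb
      exact hcon ⟨c, b, b, hc, b0, b1, b2, by rwa [hcc], b0, by rwa [hcc],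
        by rw [hcc]; simpa using b1⟩
    · push Not at h3
      obtain ⟨c, h3⟩ := h3
      have hc : c ≠ 0 := by
        rintro rfl
        simp at h3
      refine ⟨c, -(c + c), c, hc, fun h => hc (h2 _ (neg_eq_zero.1 h)), fun h => h3 ?_,
        fun h => hc ?_, fun h => hc (h2 _ (h2 _ ?_)), hc, fun h => hc ?_, fun h => h3 ?_⟩
      · nth_rewrite 3 [← h]
        abel
      · have := neg_injective h
        simpa using this
      · nth_rewrite 1 [← h]
        abel
      · simpa using h
      · rw [← h]
        abel
  obtain ⟨c, b, d, hc, hb0, hb1, hb2, hb3, hd0, hd1, hd2⟩ := key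
  obtain ⟨f, hf, hs⟩ := exists_good c b d h2 hc hb0 hb1 hb2 hb3 hd0 hd1 hd2 m (by
    rcases Nat.lt_or_ge m 2 with h | h
    · interval_cases m
      simp at hm3
    · exact h)
  exact magic_of n m hn hn6 A c hc f hf (by rw [Finset.sum_add_distrib, hs])

theorem stmt_18 (n m : ℕ) (hn : n % 4 = 2) (hn6 : 6 ≤ n) (hm : 1 ≤ m)
    (hm3 : m % 3 ≠ 1)
    (A : Type*) [AddCommGroup A] (hA : Nontrivial A) :
    vertexMagic (genFriendshipGraph n m) A ↔ ¬ Nonempty (A ≃+ ZMod 3) := by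
  exact ⟨fun h ⟨e⟩ => forward n m hn hn6 hm hm3 A h e,
    fun h => backward n m hn hn6 hm hm3 A hA h⟩
end
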